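/- Let H be an atomic cancellative monoid and let q be an atom of H. Then q is almost prime-like with respect to ∣_p if and only if for every a ∈ H the following holds: if some factorization of a into atoms (a ≃ u_1⋯u_k with atoms u_i) contains an atom associated to q, then every factorization of a into atoms contains an atom associated to q. -/

import Mathlib

def MAtom {H : Type*} [Monoid H] (u : H) : Prop :=
  ¬ IsUnit u ∧ ∀ a b : H, u = a * b → IsUnit a ∨ IsUnit b

def TAssoc {H : Type*} [Monoid H] (a b : H) : Prop :=
  ∃ ε η : Hˣ, b = (ε : H) * a * (η : H)

def Atomic (H : Type*) [Monoid H] : Prop :=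
  ∀ a : H, ¬ IsUnit a → ∃ l : List H, l ≠ [] ∧ (∀ u ∈ l, MAtom u) ∧ a = l.prod

def T1Cond {H T : Type*} [Monoid H] [Monoid T] (φ : H →* T) : Prop :=
  (∀ t : T, ∃ (ε η : Tˣ) (a : H), t = (ε : T) * φ a * (η : T)) ∧
    ∀ a : H, IsUnit (φ a) ↔ IsUnit a

def IsTransferHom {H T : Type*} [Monoid H] [Monoid T] (φ : H →* T) : Prop :=
  T1Cond φ ∧
    ∀ (a : H) (b₁ b₂ : T), φ a = b₁ * b₂ →
      ∃ (a₁ a₂ : H) (ε : Tˣ), a = a₁ * a₂ ∧ φ a₁ = b₁ * ((ε⁻¹ : Tˣ) : T) ∧ φ a₂ = (ε : T) * b₂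

def IsWeakTransferHom {H T : Type*} [Monoid H] [Monoid T] (φ : H →* T) : Prop :=
  T1Cond φ ∧
    ∀ (a : H) (n : ℕ), 0 < n → ∀ v : Fin n → T, (∀ i, MAtom (v i)) →
      φ a = (List.ofFn v).prod →
      ∃ (u : Fin n → H) (σ : Equiv.Perm (Fin n)),
        (∀ i, MAtom (u i)) ∧ a = (List.ofFn u).prod ∧ ∀ i, TAssoc (φ (u i)) (v (σ i))

def IsIsoatomic {H T : Type*} [Monoid H] [Monoid T] (φ : H →* T) : Prop :=
  ∀ u v : H, MAtom u → MAtom v → TAssoc (φ u) (φ v) → TAssoc u v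

def lengthsOf {H : Type*} [Monoid H] (a : H) : Set ℕ :=
  {n | (n = 0 ∧ IsUnit a) ∨
    ∃ l : List H, l ≠ [] ∧ (∀ u ∈ l, MAtom u) ∧ a = l.prod ∧ l.length = n}
/-- Divisibility up to permutation: `a ∣_p b`. -/
def dvdP {H : Type*} [Monoid H] (a b : H) : Prop :=
  ∃ (k l : ℕ) (u : Fin k → H) (v : Fin l → H),
    (∀ i, MAtom (u i)) ∧ (∀ j, MAtom (v j)) ∧
    TAssoc a (List.ofFn u).prod ∧ TAssoc b (List.ofFn v).prod ∧
    ∃ σ : Fin k ↪ Fin l, ∀ i, TAssoc (u i) (v (σ i))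

/-- An almost prime-like element (with respect to `∣_p`). -/
def APLike {H : Type*} [Monoid H] (q : H) : Prop :=
  ¬ IsUnit q ∧ ∀ a b : H, dvdP q (a * b) → dvdP q a ∨ dvdP q b

/-- The number of entries of `l` associated to `q`. -/
noncomputable def countAssoc {H : Type*} [Monoid H] (l : List H) (q : H) : ℕ :=
  Nat.card {i : Fin l.length // TAssoc (l.get i) q}

/-- The `q`-adic valuation of `a`: the set of numbers of occurrences (up to associativity)
of `q` in factorizations of `a` into atoms. -/
def Vq {H : Type*} [Monoid H] (q a : H) : Set ℕ :=
  {n | ∃ l : List H, (∀ u ∈ l, MAtom u) ∧ TAssoc a l.prod ∧ countAssoc l q = n}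

/-- A prime-like element: almost prime-like, with singleton `q`-adic valuations. -/
def PrimeLike {H : Type*} [Monoid H] (q : H) : Prop :=
  APLike q ∧ ∀ a : H, ∃ n : ℕ, Vq q a = {n}

/-- `H` is permutably factorial. -/
def PermutablyFactorial (H : Type*) [Monoid H] : Prop :=
  Atomic H ∧
    ∀ (k l : ℕ) (u : Fin k → H) (v : Fin l → H),
      (∀ i, MAtom (u i)) → (∀ j, MAtom (v j)) →
      (List.ofFn u).prod = (List.ofFn v).prod →
      ∃ σ : Fin k ≃ Fin l, ∀ i, TAssoc (u i) (v (σ i))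

/-!
An atom `a` is never right invertible: if `a * b = 1`, then `a = a * (b * a)` makes the idempotent
`b * a` a unit, hence `1`. So a product of atoms is a unit only if it is empty, and an atom
only if it has a single factor. Hence for atoms `q` and `b` the relation `q ∣_p b` is just `q ≃ b`,
and an almost prime-like atom `q` dividing a product of atoms is associated to one of the factors.
Conversely, if `q ∣_p a * b`, juxtaposing factorizations of `a` and `b` gives a factorization of
`a * b`; an atom associated to `q` occurs in it, hence in one of the two parts. A unit `a` or `b`
has no nonempty factorization and is absorbed by the associate relation instead.
-/

section

variable {H : Type*} [Monoid H] {a b c q : H} {l : List H}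

namespace TAssoc

theorem refl (a : H) : TAssoc a a :=
  ⟨1, 1, by simp⟩

theorem symm (h : TAssoc a b) : TAssoc b a := by
  obtain ⟨ε, η, rfl⟩ := h
  exact ⟨ε⁻¹, η⁻¹, by simp [mul_assoc]⟩

theorem trans (hab : TAssoc a b) (hbc : TAssoc b c) : TAssoc a c := by
  obtain ⟨ε, η, rfl⟩ := hab
  obtain ⟨ε', η', rfl⟩ := hbc
  exact ⟨ε' * ε, η * η', by simp [mul_assoc]⟩

theorem isUnit_iff (h : TAssoc a b) : IsUnit a ↔ IsUnit b := by
  obtain ⟨ε, η, rfl⟩ := h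
  simp

theorem mul_isUnit_left (ha : IsUnit a) (b : H) : TAssoc (a * b) b := by
  obtain ⟨ε, rfl⟩ := ha
  exact ⟨ε⁻¹, 1, by simp⟩

theorem mul_isUnit_right (a : H) (hb : IsUnit b) : TAssoc (a * b) a := by
  obtain ⟨ε, rfl⟩ := hb
  exact ⟨1, ε⁻¹, by simp⟩

end TAssoc

namespace MAtom

theorem iff_irreducible : MAtom a ↔ Irreducible a :=
  irreducible_iff.symm

theorem of_tassoc (ha : MAtom a) (h : TAssoc a b) : MAtom b := by
  obtain ⟨ε, η, rfl⟩ := h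
  rwa [iff_irreducible, irreducible_mul_units, irreducible_units_mul, ← iff_irreducible]

theorem mul_ne_one (ha : MAtom a) (b : H) : a * b ≠ 1 := by
  intro hab
  have hba_unit : IsUnit (b * a) :=
    (ha.2 a (b * a) (by rw [← mul_assoc, hab, one_mul])).resolve_left ha.1
  have hba_idem : IsIdempotentElem (b * a) := by
    rw [IsIdempotentElem, mul_assoc, ← mul_assoc a, hab, one_mul]
  have hba : b * a = 1 := (IsIdempotentElem.iff_eq_one_of_isUnit hba_unit).1 hba_idem
  exact ha.1 ⟨⟨a, b, hab, hba⟩, rfl⟩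

theorem not_isUnit_mul (ha : MAtom a) (b : H) : ¬ IsUnit (a * b) := by
  intro h
  obtain ⟨c, hc⟩ := h.exists_right_inv
  exact ha.mul_ne_one (b * c) (by rw [← mul_assoc, hc])

theorem eq_nil_of_isUnit_prod (hl : ∀ u ∈ l, MAtom u) (h : IsUnit l.prod) : l = [] := by
  cases l with
  | nil => rfl
  | cons u t =>
    rw [List.prod_cons] at h
    exact absurd h ((hl u List.mem_cons_self).not_isUnit_mul t.prod)

theorem length_eq_one_of_prod (hl : ∀ u ∈ l, MAtom u) (h : MAtom l.prod) : l.length = 1 := by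
  cases l with
  | nil => exact absurd isUnit_one h.1
  | cons u t =>
    obtain ⟨hu, ht⟩ := List.forall_mem_cons.1 hl
    have ht_unit : IsUnit t.prod := (h.2 u t.prod List.prod_cons).resolve_left hu.1
    rw [eq_nil_of_isUnit_prod ht ht_unit, List.length_singleton]

end MAtom

namespace dvdP

theorem congr_right (h : dvdP q a) (hab : TAssoc a b) : dvdP q b := by
  obtain ⟨k, n, u, v, hu, hv, hqu, hav, σ, hσ⟩ := h
  exact ⟨k, n, u, v, hu, hv, hqu, hab.symm.trans hav, σ, hσ⟩

theorem isUnit (h : dvdP a b) (hb : IsUnit b) : IsUnit a := by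
  obtain ⟨k, n, u, v, -, hv, hau, hbv, σ, -⟩ := h
  have hv_nil : List.ofFn v = [] :=
    MAtom.eq_nil_of_isUnit_prod (List.forall_mem_ofFn_iff.2 hv) (hbv.isUnit_iff.1 hb)
  obtain rfl : n = 0 := List.ofFn_eq_nil_iff.1 hv_nil
  obtain rfl : k = 0 := by simpa using Fintype.card_le_of_embedding σ
  exact hau.isUnit_iff.2 (by simp)

theorem iff_exists_factorization (hq : MAtom q) :
    dvdP q b ↔
      ∃ l : List H, (∀ u ∈ l, MAtom u) ∧ TAssoc b l.prod ∧ ∃ u ∈ l, TAssoc q u := by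
  constructor
  · rintro ⟨k, n, u, v, hu, hv, hqu, hbv, σ, hσ⟩
    obtain rfl : k = 1 := by
      simpa using MAtom.length_eq_one_of_prod (List.forall_mem_ofFn_iff.2 hu) (hq.of_tassoc hqu)
    have hqu₀ : TAssoc q (u 0) := by simpa using hqu
    exact ⟨List.ofFn v, List.forall_mem_ofFn_iff.2 hv, hbv, v (σ 0), List.mem_ofFn.2 ⟨σ 0, rfl⟩,
      hqu₀.trans (hσ 0)⟩
  · rintro ⟨l, hl, hbl, u, hu, hqu⟩
    obtain ⟨i, rfl⟩ := List.get_of_mem hu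
    exact ⟨1, l.length, fun _ ↦ q, l.get, fun _ ↦ hq, fun j ↦ hl _ (l.get_mem j),
      by simpa using TAssoc.refl q, by rwa [List.ofFn_get],
      ⟨fun _ ↦ i, Function.injective_of_subsingleton _⟩, fun _ ↦ hqu⟩

theorem tassoc (h : dvdP q b) (hq : MAtom q) (hb : MAtom b) : TAssoc q b := by
  obtain ⟨l, hl, hbl, u, hu, hqu⟩ := (iff_exists_factorization hq).1 h
  obtain ⟨v, rfl⟩ := List.length_eq_one_iff.1 (MAtom.length_eq_one_of_prod hl (hb.of_tassoc hbl))
  rw [List.mem_singleton.1 hu] at hqu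
  exact hqu.trans (by simpa using hbl.symm)

theorem prod_of_mem (hl : ∀ u ∈ l, MAtom u) (hq : ∃ u ∈ l, TAssoc q u) : dvdP q l.prod := by
  obtain ⟨u, hu, hqu⟩ := hq
  exact (iff_exists_factorization ((hl u hu).of_tassoc hqu.symm)).2
    ⟨l, hl, .refl _, u, hu, hqu⟩

end dvdP

namespace APLike

theorem exists_mem_dvdP (hq : APLike q) (h : dvdP q l.prod) : ∃ u ∈ l, dvdP q u := by
  induction l with
  | nil => exact absurd (h.isUnit isUnit_one) hq.1
  | cons u t ih =>
    rw [List.prod_cons] at h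
    rw [List.exists_mem_cons_iff]
    exact (hq.2 u t.prod h).imp_right ih

theorem iff_forall_exists_mem_tassoc (hH : Atomic H) (hq : MAtom q) :
    APLike q ↔
      ∀ l : List H, (∀ u ∈ l, MAtom u) → dvdP q l.prod → ∃ u ∈ l, TAssoc q u := by
  constructor
  · intro hap l hl h
    obtain ⟨u, hu, hqu⟩ := hap.exists_mem_dvdP h
    exact ⟨u, hu, hqu.tassoc hq (hl u hu)⟩
  · refine fun h ↦ ⟨hq.1, fun a b hab ↦ ?_⟩
    by_cases ha : IsUnit a
    · exact .inr (hab.congr_right (.mul_isUnit_left ha b))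
    by_cases hb : IsUnit b
    · exact .inl (hab.congr_right (.mul_isUnit_right a hb))
    obtain ⟨l, -, hl, rfl⟩ := hH a ha
    obtain ⟨m, -, hm, rfl⟩ := hH b hb
    obtain ⟨u, hu, hqu⟩ :=
      h (l ++ m) (List.forall_mem_append.2 ⟨hl, hm⟩) (by rwa [List.prod_append])
    exact (List.mem_append.1 hu).imp (fun hu ↦ .prod_of_mem hl ⟨u, hu, hqu⟩)
      (fun hu ↦ .prod_of_mem hm ⟨u, hu, hqu⟩)

end APLike

end

theorem aplike_iff_occurs_in_all_factorizations_general {H : Type*} [Monoid H] {q : H}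
    (hH : Atomic H) (hq : MAtom q) :
    APLike q ↔
      ∀ (a : H) (l l' : List H), (∀ u ∈ l, MAtom u) → (∀ u ∈ l', MAtom u) →
        TAssoc a l.prod → TAssoc a l'.prod →
        (∃ u ∈ l, TAssoc q u) → ∃ u ∈ l', TAssoc q u := by
  rw [APLike.iff_forall_exists_mem_tassoc hH hq]
  constructor
  · intro h a l l' hl hl' hal hal' hql
    exact h l' hl' ((dvdP.prod_of_mem hl hql).congr_right (hal.symm.trans hal'))
  · intro h l' hl' hdvd
    obtain ⟨l, hl, hal, hql⟩ := (dvdP.iff_exists_factorization hq).1 hdvd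
    exact h l'.prod l l' hl hl' hal (.refl _) hql

/-- An atom `q` is almost prime-like (w.r.t. `∣_p`) iff whenever some
factorization of an element `a` into atoms contains an atom associated to `q`, then
every factorization of `a` into atoms contains an atom associated to `q`. -/
theorem aplike_iff_occurs_in_all_factorizations {H : Type*} [CancelMonoid H]
    (hH : Atomic H) (q : H) (hq : MAtom q) :
    APLike q ↔
      ∀ (a : H) (l l' : List H), (∀ u ∈ l, MAtom u) → (∀ u ∈ l', MAtom u) →
        TAssoc a l.prod → TAssoc a l'.prod →
        (∃ u ∈ l, TAssoc q u) → ∃ u ∈ l', TAssoc q u :=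
  aplike_iff_occurs_in_all_factorizations_general hH hq
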